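/- arXiv:1904.10055 — 3 statements merged into one kernel-verified Lean document; each statement's English description precedes it below -/
import Mathlib

section
/- Let s, s' : ℝ³ → ℝ be compactly supported C¹ functions with ∫ s = q, ∫ s' = 1, supp s ⊆ closedBall(0, r) and supp s' ⊆ closedBall(0, r'). Let γ : [0,1] → ℝ³ be a C¹ path and g_γ(x) = ∫₀¹ s(x − γ(u)) γ'(u) du. Let B ⊂ ℝ³ be a rectangular box and s'_B(x) = ∫_B s'(x − y) dy. Assume that for each endpoint p ∈ {γ(0), γ(1)} either closedBall(p, r + r') ⊆ B (p is 'enclosed') or closedBall(p, r + r') ∩ B = ∅ (p is 'outside'). Then −∫_{ℝ³} g_γ(x) · (grad s'_B)(x) dx = q·(χ₀ − χ₁), where χ₀ = 1 if γ(0) is enclosed and 0 if it is outside, and χ₁ = 1 if γ(1) is enclosed and 0 if it is outside. In particular the smeared flux of g_γ through the boundary of B equals q if B encloses only γ(0), −q if B encloses only γ(1), and 0 if B encloses both endpoints or neither (Gauss' law for the smeared path field). -/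
/-!
Pair the path field with the differential of a `C¹` function `F`. By Fubini and the translation
`x = z + γ u`, the integral `∫ dF_x (g_γ x) dx` becomes `∫ s z • ∫₀¹ dF_{z + γ u} (γ' u) du dz`,
and the inner integral is `F (z + γ 1) - F (z + γ 0)`. If `F` is a mollified indicator and `z` lies
in the support of `s`, each of these two values is `∫ s'` or `0` according as the endpoint is
enclosed or outside.
-/

open MeasureTheory Classical

/-- ℝ³ with the Euclidean norm. -/
abbrev E3 := EuclideanSpace ℝ (Fin 3)

/-- Partial derivative in the i-th coordinate direction. -/
noncomputable def pdE (f : E3 → ℝ) (i : Fin 3) (x : E3) : ℝ :=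
  fderiv ℝ f x (EuclideanSpace.single i 1)

/-- Gradient of a scalar function on ℝ³. -/
noncomputable def gradE (f : E3 → ℝ) (x : E3) : E3 :=
  (WithLp.equiv 2 (Fin 3 → ℝ)).symm (fun i => pdE f i x)

/-- Euclidean inner product on ℝ³. -/
def dotE (v w : E3) : ℝ := ∑ i, v i * w i

/-- The path-smeared vector field `g_γ(x) = ∫₀¹ s(x − γ(u)) γ'(u) du`. -/
noncomputable def pathFieldE (s : E3 → ℝ) (γ : ℝ → E3) (x : E3) : E3 :=
  ∫ u in (0:ℝ)..1, s (x - γ u) • deriv γ u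

/-- The rectangular box `[a₁,b₁] × [a₂,b₂] × [a₃,b₃]` in ℝ³. -/
def boxSet (a b : Fin 3 → ℝ) : Set E3 := {x | ∀ i, a i ≤ x i ∧ x i ≤ b i}

/-- The box-mollified function `s'_B(x) = ∫_B s'(x − y) dy`. -/
noncomputable def boxMollE (s' : E3 → ℝ) (a b : Fin 3 → ℝ) (x : E3) : ℝ :=
  ∫ y in boxSet a b, s' (x - y)

section Integrability

open Set

theorem integrableOn_snd_smul_of_hasCompactSupport {X Y V : Type*}
    [TopologicalSpace X] [T2Space X] [SecondCountableTopology X] [MeasurableSpace X]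
    [OpensMeasurableSpace X] {ν : Measure X} [IsFiniteMeasureOnCompacts ν] [SFinite ν]
    [TopologicalSpace Y] [T2Space Y] [SecondCountableTopology Y] [MeasurableSpace Y]
    [OpensMeasurableSpace Y] {μ : Measure Y} [SFinite μ]
    [NormedAddCommGroup V] [NormedSpace ℝ V] {s : Y → ℝ} (hs : Integrable s μ)
    (hs_supp : HasCompactSupport s) {H : X × Y → V} (hH : Continuous H)
    {K : Set X} (hK : IsCompact K) :
    IntegrableOn (fun p : X × Y ↦ s p.2 • H p) (K ×ˢ univ) (ν.prod μ) := by
  have : IsFiniteMeasure (ν.restrict K) := isFiniteMeasure_restrict.mpr hK.measure_ne_top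
  have hs_snd : IntegrableOn (fun p : X × Y ↦ s p.2) (K ×ˢ univ) (ν.prod μ) := by
    rw [IntegrableOn, ← Measure.prod_restrict, Measure.restrict_univ]
    exact hs.comp_snd _
  have hs_smul : IntegrableOn (fun p : X × Y ↦ s p.2 • H p) (K ×ˢ tsupport s) (ν.prod μ) :=
    (hs_snd.mono_set (prod_mono_right (subset_univ _))).smul_continuousOn hH.continuousOn
      (hK.prod hs_supp)
  refine hs_smul.of_forall_sdiff_eq_zero (hK.measurableSet.prod .univ) ?_
  rintro ⟨x, y⟩ ⟨⟨hx, -⟩, hxy⟩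
  rw [image_eq_zero_of_notMem_tsupport fun hy ↦ hxy ⟨hx, hy⟩, zero_smul]

theorem measurePreserving_prodMk_sub {X G : Type*} [MeasurableSpace X] (ν : Measure X)
    [SFinite ν] [AddGroup G] [MeasurableSpace G] [MeasurableAdd G] [MeasurableSub₂ G]
    (μ : Measure G) [SFinite μ] [μ.IsAddRightInvariant] {γ : X → G} (hγ : Measurable γ) :
    MeasurePreserving (fun p : X × G ↦ (p.1, p.2 - γ p.1)) (ν.prod μ) (ν.prod μ) :=
  (MeasurePreserving.id ν).skew_product (measurable_snd.sub (hγ.comp measurable_fst))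
    (.of_forall fun x ↦ map_sub_right_eq_self μ (γ x))

end Integrability

section PathField

variable {E V : Type*} [NormedAddCommGroup E] [NormedSpace ℝ E]
  [NormedAddCommGroup V] [NormedSpace ℝ V]

/-- The path-smeared vector field `g_γ` in an arbitrary normed space. For `s` merely integrable the
integral exists for almost every `x` only, and is `0` by convention elsewhere. -/
noncomputable def pathField (s : E → ℝ) (γ : ℝ → E) (x : E) : E :=
  ∫ u in (0 : ℝ)..1, s (x - γ u) • deriv γ u

theorem integral_fderiv_apply_deriv [CompleteSpace V] {F : E → V} (hF : ContDiff ℝ 1 F)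
    {γ : ℝ → E} (hγ : ContDiff ℝ 1 γ) (a b : ℝ) :
    ∫ u in a..b, fderiv ℝ F (γ u) (deriv γ u) = F (γ b) - F (γ a) := by
  have hcont : Continuous fun u ↦ fderiv ℝ F (γ u) (deriv γ u) :=
    ((hF.continuous_fderiv one_ne_zero).comp hγ.continuous).clm_apply
      (hγ.continuous_deriv le_rfl)
  refine intervalIntegral.integral_eq_sub_of_hasDerivAt (f := F ∘ γ) (fun u _ ↦ ?_)
    (hcont.intervalIntegrable a b)
  exact (hF.differentiable one_ne_zero (γ u)).hasFDerivAt.comp_hasDerivAt u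
    (hγ.differentiable one_ne_zero u).hasDerivAt

variable [FiniteDimensional ℝ E] [MeasurableSpace E] [BorelSpace E]
  {μ : Measure E} [μ.IsAddHaarMeasure] {s : E → ℝ} {γ : ℝ → E}

theorem ae_intervalIntegrable_smul_deriv (hs : Integrable s μ) (hγ : ContDiff ℝ 1 γ) (a b : ℝ) :
    ∀ᵐ x ∂μ, IntervalIntegrable (fun u ↦ s (x - γ u) • deriv γ u) volume a b := by
  have hγ' : IntegrableOn (deriv γ) (Set.uIoc a b) :=
    ((hγ.continuous_deriv le_rfl).intervalIntegrable a b).def'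
  have hshear := measurePreserving_prodMk_sub (volume.restrict (Set.uIoc a b)) μ
    hγ.continuous.measurable
  filter_upwards [(hshear.integrable_comp_of_integrable (hs.smul_prod hγ').swap).prod_left_ae]
    with x hx
  exact intervalIntegrable_iff.mpr hx

theorem integrable_smul_fderiv_apply_deriv (hs : Integrable s μ) (hs_supp : HasCompactSupport s)
    {F : E → V} (hF : ContDiff ℝ 1 F) (hγ : ContDiff ℝ 1 γ) (a b : ℝ) :
    Integrable (fun p : ℝ × E ↦ s p.2 • fderiv ℝ F (p.2 + γ p.1) (deriv γ p.1))
      ((volume.restrict (Set.uIoc a b)).prod μ) := by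
  have hcont : Continuous fun p : ℝ × E ↦ fderiv ℝ F (p.2 + γ p.1) (deriv γ p.1) :=
    ((hF.continuous_fderiv one_ne_zero).comp
      (continuous_snd.add (hγ.continuous.comp continuous_fst))).clm_apply
      ((hγ.continuous_deriv le_rfl).comp continuous_fst)
  have hint := (integrableOn_snd_smul_of_hasCompactSupport (ν := volume) hs hs_supp hcont
    (isCompact_uIcc (a := a) (b := b))).mono_set (Set.prod_mono_left Set.uIoc_subset_uIcc)
  rwa [IntegrableOn, ← Measure.prod_restrict, Measure.restrict_univ] at hint

theorem integral_fderiv_apply_pathField [CompleteSpace V] (hs : Integrable s μ)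
    (hs_supp : HasCompactSupport s) {F : E → V} (hF : ContDiff ℝ 1 F) (hγ : ContDiff ℝ 1 γ) :
    ∫ x, fderiv ℝ F x (pathField s γ x) ∂μ = ∫ z, s z • (F (z + γ 1) - F (z + γ 0)) ∂μ := by
  have : CompleteSpace E := FiniteDimensional.complete ℝ E
  have hint := integrable_smul_fderiv_apply_deriv hs hs_supp hF hγ 0 1
  have hint_sub : Integrable (fun p : ℝ × E ↦ s (p.2 - γ p.1) • fderiv ℝ F p.2 (deriv γ p.1))
      ((volume.restrict (Set.uIoc 0 1)).prod μ) := by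
    simpa only [Function.comp_def, sub_add_cancel] using (measurePreserving_prodMk_sub _ μ
      hγ.continuous.measurable).integrable_comp_of_integrable hint
  calc ∫ x, fderiv ℝ F x (pathField s γ x) ∂μ
      = ∫ x, (∫ u in (0 : ℝ)..1, s (x - γ u) • fderiv ℝ F x (deriv γ u)) ∂μ := by
        refine integral_congr_ae ?_
        filter_upwards [ae_intervalIntegrable_smul_deriv hs hγ 0 1] with x hx
        simp only [pathField, ← ContinuousLinearMap.intervalIntegral_comp_comm _ hx, map_smul]
    _ = ∫ u in (0 : ℝ)..1, ∫ x, s (x - γ u) • fderiv ℝ F x (deriv γ u) ∂μ :=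
        (intervalIntegral_integral_swap hint_sub).symm
    _ = ∫ u in (0 : ℝ)..1, ∫ z, s z • fderiv ℝ F (z + γ u) (deriv γ u) ∂μ := by
        congr 1 with u
        rw [← integral_add_right_eq_self _ (γ u)]
        simp only [add_sub_cancel_right]
    _ = ∫ z, (∫ u in (0 : ℝ)..1, s z • fderiv ℝ F (z + γ u) (deriv γ u)) ∂μ :=
        intervalIntegral_integral_swap hint
    _ = ∫ z, s z • (F (z + γ 1) - F (z + γ 0)) ∂μ := by
        congr 1 with z
        rw [intervalIntegral.integral_smul,
          ← integral_fderiv_apply_deriv hF (contDiff_const.add hγ : ContDiff ℝ 1 (z + γ ·))]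
        simp only [deriv_const_add]

end PathField

section Mollification

open Function Metric

/-- The mollified indicator function `s'_B(x) = ∫_B s'(x - y) dμ(y)` of an arbitrary set `B`, for a
vector-valued mollifier `s'`. -/
noncomputable def setMollification {E V : Type*} [Sub E] [MeasurableSpace E]
    [NormedAddCommGroup V] [NormedSpace ℝ V] (μ : Measure E) (s' : E → V) (B : Set E) (x : E) : V :=
  ∫ y in B, s' (x - y) ∂μ

theorem mem_closedBall_of_apply_sub_ne_zero {E V : Type*} [SeminormedAddCommGroup E] [Zero V]
    {s' : E → V} {r' : ℝ} (hs' : support s' ⊆ closedBall 0 r') {x y : E} (hy : s' (x - y) ≠ 0) :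
    y ∈ closedBall x r' := by
  rw [mem_closedBall', dist_eq_norm]
  exact mem_closedBall_zero_iff.mp (hs' hy)

variable {E V : Type*} [NormedAddCommGroup E] [MeasurableSpace E] {μ : Measure E}
  [NormedAddCommGroup V] [NormedSpace ℝ V] {s' : E → V} {r r' : ℝ} {B : Set E} {x p z : E}

theorem setMollification_eq_zero (hs' : support s' ⊆ closedBall 0 r')
    (hx : Disjoint (closedBall x r') B) : setMollification μ s' B x = 0 := by
  refine setIntegral_eq_zero_of_forall_eq_zero fun y hy ↦ ?_
  by_contra hne
  exact hx.notMem_of_mem_left (mem_closedBall_of_apply_sub_ne_zero hs' hne) hy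

variable [BorelSpace E]

theorem contDiff_setMollification [NormedSpace ℝ E] [IsLocallyFiniteMeasure μ] {n : ℕ∞}
    (hs' : ContDiff ℝ n s') (hs'_supp : HasCompactSupport s') (B : Set E) :
    ContDiff ℝ n (setMollification μ s' B) := by
  have hconv : setMollification μ s' B =
      convolution (fun _ ↦ (1 : ℝ)) s' (ContinuousLinearMap.lsmul ℝ ℝ) (μ.restrict B) := by
    ext x
    simp [setMollification, convolution]
  rw [hconv]
  exact hs'_supp.contDiff_convolution_right _ (locallyIntegrable_const 1) hs'

theorem setMollification_eq_integral [μ.IsAddLeftInvariant] [μ.IsNegInvariant]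
    (hs' : support s' ⊆ closedBall 0 r') (hx : closedBall x r' ⊆ B) :
    setMollification μ s' B x = ∫ y, s' y ∂μ := by
  rw [setMollification, setIntegral_eq_integral_of_forall_compl_eq_zero, integral_sub_left_eq_self]
  intro y hy
  by_contra hne
  exact hy (hx (mem_closedBall_of_apply_sub_ne_zero hs' hne))

theorem setMollification_add_eq_ite_smul [μ.IsAddLeftInvariant] [μ.IsNegInvariant]
    (hs' : support s' ⊆ closedBall 0 r') (hz : z ∈ closedBall 0 r)
    (hp : closedBall p (r + r') ⊆ B ∨ Disjoint (closedBall p (r + r')) B) :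
    setMollification μ s' B (z + p) =
      (if closedBall p (r + r') ⊆ B then (1 : ℝ) else 0) • ∫ y, s' y ∂μ := by
  have hball : closedBall (z + p) r' ⊆ closedBall p (r + r') := by
    refine closedBall_subset_closedBall' ?_
    rw [dist_eq_norm, add_sub_cancel_right, add_comm]
    gcongr
    exact mem_closedBall_zero_iff.mp hz
  split_ifs with h
  · rw [setMollification_eq_integral hs' (hball.trans h), one_smul]
  · rw [setMollification_eq_zero hs' ((hp.resolve_left h).mono_left hball), zero_smul]

theorem gauss_law_pathField_general [NormedSpace ℝ E] [FiniteDimensional ℝ E]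
    [μ.IsAddHaarMeasure] [CompleteSpace V] {s : E → ℝ} (hs : Integrable s μ)
    (hs_supp : support s ⊆ closedBall 0 r) (hs' : ContDiff ℝ 1 s')
    (hs'_supp : support s' ⊆ closedBall 0 r') {γ : ℝ → E} (hγ : ContDiff ℝ 1 γ)
    (h0 : closedBall (γ 0) (r + r') ⊆ B ∨ Disjoint (closedBall (γ 0) (r + r')) B)
    (h1 : closedBall (γ 1) (r + r') ⊆ B ∨ Disjoint (closedBall (γ 1) (r + r')) B) :
    -∫ x, fderiv ℝ (setMollification μ s' B) x (pathField s γ x) ∂μ =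
      (∫ x, s x ∂μ) • ((if closedBall (γ 0) (r + r') ⊆ B then (1 : ℝ) else 0) -
        (if closedBall (γ 1) (r + r') ⊆ B then (1 : ℝ) else 0)) • ∫ x, s' x ∂μ := by
  have : ProperSpace E := FiniteDimensional.proper ℝ E
  have hs_cpt : HasCompactSupport s :=
    .of_support_subset_isCompact (isCompact_closedBall 0 r) hs_supp
  have hs'_cpt : HasCompactSupport s' :=
    .of_support_subset_isCompact (isCompact_closedBall 0 r') hs'_supp
  rw [integral_fderiv_apply_pathField hs hs_cpt (contDiff_setMollification hs' hs'_cpt B) hγ,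
    ← integral_neg, ← integral_smul_const]
  congr 1 with z
  by_cases hz : s z = 0
  · simp [hz]
  rw [setMollification_add_eq_ite_smul hs'_supp (hs_supp hz) h0,
    setMollification_add_eq_ite_smul hs'_supp (hs_supp hz) h1, ← sub_smul, ← smul_neg, ← neg_smul,
    neg_sub]

end Mollification

theorem fderiv_apply_eq_dotE_gradE (F : E3 → ℝ) (x v : E3) :
    fderiv ℝ F x v = dotE v (gradE F x) := by
  conv_lhs => rw [← (EuclideanSpace.basisFun (Fin 3) ℝ).sum_repr v]
  simp [dotE, gradE, pdE]

/-- Gauss' law for the smeared path field: the smeared flux of `g_γ` through the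
boundary of a box `B` equals `q` times (1 if `γ(0)` is enclosed, else 0) minus
(1 if `γ(1)` is enclosed, else 0), provided each endpoint is either enclosed in or
outside of `B` at mollification distance `r + r'`. -/
theorem gauss_law_pathField (s s' : E3 → ℝ) (q r r' : ℝ)
    (hs : ContDiff ℝ 1 s) (hsc : HasCompactSupport s)
    (hs' : ContDiff ℝ 1 s') (hs'c : HasCompactSupport s')
    (hq : ∫ x, s x = q) (h1 : ∫ x, s' x = 1)
    (hss : tsupport s ⊆ Metric.closedBall 0 r)
    (hss' : tsupport s' ⊆ Metric.closedBall 0 r')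
    (γ : ℝ → E3) (hγ : ContDiff ℝ 1 γ)
    (a b : Fin 3 → ℝ) (hab : ∀ i, a i ≤ b i)
    (h0 : Metric.closedBall (γ 0) (r + r') ⊆ boxSet a b ∨
          Metric.closedBall (γ 0) (r + r') ∩ boxSet a b = ∅)
    (h1' : Metric.closedBall (γ 1) (r + r') ⊆ boxSet a b ∨
           Metric.closedBall (γ 1) (r + r') ∩ boxSet a b = ∅) :
    -(∫ x, dotE (pathFieldE s γ x) (gradE (boxMollE s' a b) x)) =
      q * ((if Metric.closedBall (γ 0) (r + r') ⊆ boxSet a b then (1:ℝ) else 0) -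
           (if Metric.closedBall (γ 1) (r + r') ⊆ boxSet a b then (1:ℝ) else 0)) := by
  simpa only [fderiv_apply_eq_dotE_gradE, hq, h1, smul_eq_mul, mul_one] using!
    gauss_law_pathField_general (μ := volume) (B := boxSet a b)
      (hs.continuous.integrable_of_hasCompactSupport hsc) ((subset_tsupport s).trans hss) hs'
      ((subset_tsupport s').trans hss') hγ (h0.imp_right Set.disjoint_iff_inter_eq_empty.mpr)
      (h1'.imp_right Set.disjoint_iff_inter_eq_empty.mpr)
end

section
/- Let x₁, x₂ ∈ ℝ³, let γ₀ : [0,1] → ℝ³ be a C¹ path with γ₀(0) = x₁ and γ₀(1) = x₂, and for y ∈ ℝ³ set γ_y(u) = γ₀(u) + u(1−u)y. Let s : ℝ³ → ℝ be a compactly supported continuous function with ∫ s = q. For 0 < ε < 1/2 and a vector field g : ℝ³ → ℝ³ define ⟨b_ε, g⟩ = ∫_ε^{1−ε} ∫_{ℝ³} s(y) g(γ_y(u)) · (γ₀'(u) + (1−2u)y) dy du. Then for every C¹ function s' : ℝ³ → ℝ, lim_{ε→0} ⟨b_ε, grad s'⟩ = q·( s'(x₂) − s'(x₁) ). Equivalently,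 the distributions div b_ε converge, as ε → 0, to q·δ_{x₁} − q·δ_{x₂} when tested against C¹ functions. In particular, if s' vanishes at both x₁ and x₂, the limit is 0, so the limiting gauge-bridge field is divergence-free away from the two charge locations. -/
/-!
Along each curve `γ_y` the integrand `(grad s')(γ_y(u)) · γ_y'(u)` is the `u`-derivative of
`s'(γ_y(u))`. Exchanging the two integrals, `⟨b_ε, grad s'⟩` is therefore the `s`-weighted integral
over `y` of `s'(γ_y(1 - ε)) - s'(γ_y(ε))`. By dominated convergence on the compact support of `s`
the limit may be taken inside, and since `u (1 - u)` vanishes at both endpoints, every `γ_y` runs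
from `x₁` to `x₂`, so the limit integrand is the constant `s'(x₂) - s'(x₁)` times the weight.
-/

open MeasureTheory Filter

/-- Partial derivative of a function on ℝ³ in the i-th coordinate direction. -/
noncomputable def pd (f : (Fin 3 → ℝ) → ℝ) (i : Fin 3) (x : Fin 3 → ℝ) : ℝ :=
  fderiv ℝ f x (Pi.single i 1)

/-- Gradient of a scalar function on ℝ³. -/
noncomputable def grad3 (h : (Fin 3 → ℝ) → ℝ) (x : Fin 3 → ℝ) : Fin 3 → ℝ :=
  fun i => pd h i x

/-- Euclidean inner product on ℝ³. -/
def dot3 (v w : Fin 3 → ℝ) : ℝ := ∑ i, v i * w i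

/-- The gauge-bridge pairing
`⟨b_ε, g⟩ = ∫_ε^{1−ε} ∫ s(y) g(γ_y(u)) · (γ₀'(u) + (1−2u)y) dy du`,
where `γ_y(u) = γ₀(u) + u(1−u)y`. -/
noncomputable def bridgePair (γ₀ : ℝ → Fin 3 → ℝ) (s : (Fin 3 → ℝ) → ℝ) (ε : ℝ)
    (g : (Fin 3 → ℝ) → Fin 3 → ℝ) : ℝ :=
  ∫ u in ε..(1 - ε),
    ∫ y, s y * dot3 (g (γ₀ u + (u * (1 - u)) • y)) (deriv γ₀ u + (1 - 2 * u) • y)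

open Set Topology Function

section WeightedIntegral

variable {X F : Type*} [TopologicalSpace X] [MeasurableSpace X] [NormedAddCommGroup F]
  [NormedSpace ℝ F] {μ : Measure X}

lemma setIntegral_tsupport_smul (w : X → ℝ) (g : X → F) :
    ∫ x in tsupport w, w x • g x ∂μ = ∫ x, w x • g x ∂μ :=
  setIntegral_eq_integral_of_forall_compl_eq_zero fun x hx => by
    rw [image_eq_zero_of_notMem_tsupport hx, zero_smul]

variable [T2Space X] [OpensMeasurableSpace X] {K : Set X} {w : X → ℝ}

lemma integrableOn_smul_of_continuousOn_isCompact {g : X → F} (hK : IsCompact K)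
    (hw : IntegrableOn w K μ) (hg : ContinuousOn g K) :
    IntegrableOn (fun x => w x • g x) K μ := by
  obtain ⟨C, hC⟩ := hK.exists_bound_of_continuousOn hg
  exact hw.smul_bdd C (hg.aestronglyMeasurable_of_isCompact hK hK.measurableSet)
    (ae_restrict_of_forall_mem hK.measurableSet hC)

lemma continuousOn_setIntegral_smul {Z : Type*} [TopologicalSpace Z] [FirstCountableTopology Z]
    {I : Set Z} {f : Z → X → F} (hI : IsCompact I) (hK : IsCompact K)
    (hw : IntegrableOn w K μ) (hf : ContinuousOn (uncurry f) (I ×ˢ K)) :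
    ContinuousOn (fun z => ∫ x in K, w x • f z x ∂μ) I := by
  obtain ⟨C, hC⟩ := (hI.prod hK).exists_bound_of_continuousOn hf
  refine continuousOn_of_dominated (bound := fun x => ‖w x‖ * C) (fun z hz => ?_)
    (fun z hz => ?_) (hw.norm.mul_const C) ?_
  · exact (integrableOn_smul_of_continuousOn_isCompact hK hw
      (hf.uncurry_left z hz)).aestronglyMeasurable
  · refine ae_restrict_of_forall_mem hK.measurableSet fun x hx => ?_
    rw [norm_smul]
    gcongr
    exact hC (z, x) ⟨hz, hx⟩
  · exact ae_restrict_of_forall_mem hK.measurableSet fun x hx =>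
      (hf.uncurry_right x hx).const_smul (w x)

lemma intervalIntegral_setIntegral_smul_of_hasDerivAt [CompleteSpace F] [SFinite μ] {a b : ℝ}
    {f f' : ℝ → X → F} (hK : IsCompact K) (hw : IntegrableOn w K μ)
    (hf' : ContinuousOn (uncurry f') (uIcc a b ×ˢ K))
    (hderiv : ∀ x ∈ K, ∀ u ∈ uIcc a b, HasDerivAt (f · x) (f' u x) u) :
    ∫ u in a..b, ∫ x in K, w x • f' u x ∂μ = ∫ x in K, w x • (f b x - f a x) ∂μ := by
  have hint : IntegrableOn (fun p : ℝ × X => w p.2 • f' p.1 p.2) (uIcc a b ×ˢ K)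
      (volume.prod μ) := by
    refine integrableOn_smul_of_continuousOn_isCompact (isCompact_uIcc.prod hK) ?_ hf'
    rw [IntegrableOn, ← Measure.prod_restrict]
    have : IsFiniteMeasure (volume.restrict (uIcc a b)) :=
      isFiniteMeasure_restrict.2 isCompact_uIcc.measure_ne_top
    exact hw.comp_snd _
  rw [intervalIntegral_integral_swap]
  · refine setIntegral_congr_fun hK.measurableSet fun x hx => ?_
    rw [intervalIntegral.integral_smul, intervalIntegral.integral_eq_sub_of_hasDerivAt
      (hderiv x hx) (hf'.uncurry_right x hx).intervalIntegrable]
  · rw [Measure.prod_restrict]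
    exact hint.mono_set (prod_mono_left uIoc_subset_uIcc)

end WeightedIntegral

section Bridge

variable {E F : Type*} [NormedAddCommGroup E] [NormedSpace ℝ E]
  [NormedAddCommGroup F] [NormedSpace ℝ F]

/-- The path `γ_y(u) = γ(u) + u(1 - u)y`, a deformation of `γ` in the direction `y` that fixes
its endpoints at `u = 0` and `u = 1`. -/
def bridgePath (γ : ℝ → E) (y : E) (u : ℝ) : E :=
  γ u + (u * (1 - u)) • y

/-- The velocity `γ'(u) + (1 - 2u)y` of `bridgePath γ y`, written out explicitly. It is the
derivative of the path only where `γ` is differentiable. -/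
noncomputable def bridgeVelocity (γ : ℝ → E) (y : E) (u : ℝ) : E :=
  deriv γ u + (1 - 2 * u) • y

/-- The truncated gauge-bridge pairing `⟨b_ε, ω⟩` with an `F`-valued one-form `ω` on `E`, the bridge
paths being weighted by `w` with respect to `μ`. A vector field `g` on `ℝ³` corresponds to the
one-form `v ↦ g · v`. -/
noncomputable def bridgePairing [MeasurableSpace E] (μ : Measure E) (γ : ℝ → E) (w : E → ℝ)
    (ε : ℝ) (ω : E → E →L[ℝ] F) : F :=
  ∫ u in ε..(1 - ε), ∫ y, w y • ω (bridgePath γ y u) (bridgeVelocity γ y u) ∂μ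

@[simp]
lemma bridgePath_zero (γ : ℝ → E) (y : E) : bridgePath γ y 0 = γ 0 := by
  simp [bridgePath]

@[simp]
lemma bridgePath_one (γ : ℝ → E) (y : E) : bridgePath γ y 1 = γ 1 := by
  simp [bridgePath]

lemma hasDerivAt_bridgePath {γ : ℝ → E} {u : ℝ} (hγ : DifferentiableAt ℝ γ u) (y : E) :
    HasDerivAt (bridgePath γ y) (bridgeVelocity γ y u) u := by
  have hcoeff : HasDerivAt (fun v : ℝ => v * (1 - v)) (1 - 2 * u) u :=
    ((hasDerivAt_id' u).mul ((hasDerivAt_id' u).const_sub 1)).congr_deriv (by ring)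
  exact hγ.hasDerivAt.add (hcoeff.smul_const y)

lemma continuousOn_uncurry_bridgePath {γ : ℝ → E} {I : Set ℝ} (hγ : ContinuousOn γ I) (K : Set E) :
    ContinuousOn (fun p : ℝ × E => bridgePath γ p.2 p.1) (I ×ˢ K) :=
  (hγ.comp continuousOn_fst fun _ hp => hp.1).add (by fun_prop)

lemma continuousOn_uncurry_bridgeVelocity {γ : ℝ → E} {I : Set ℝ} (hγ : ContinuousOn (deriv γ) I)
    (K : Set E) : ContinuousOn (fun p : ℝ × E => bridgeVelocity γ p.2 p.1) (I ×ˢ K) :=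
  (hγ.comp continuousOn_fst fun _ hp => hp.1).add (by fun_prop)

variable [MeasurableSpace E] [OpensMeasurableSpace E] {μ : Measure E} {γ : ℝ → E} {w : E → ℝ}
  {φ : E → F}

lemma bridgePairing_fderiv [CompleteSpace F] [SFinite μ] {ε : ℝ}
    (hγ : ContDiffOn ℝ 1 γ (Ioo 0 1)) (hw : Integrable w μ) (hwc : HasCompactSupport w)
    (hφ : ContDiff ℝ 1 φ) (hε : ε ∈ Ioo 0 1) :
    bridgePairing μ γ w ε (fderiv ℝ φ) =
      ∫ y, w y • (φ (bridgePath γ y (1 - ε)) - φ (bridgePath γ y ε)) ∂μ := by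
  have hsub : uIcc ε (1 - ε) ⊆ Ioo 0 1 :=
    ordConnected_Ioo.uIcc_subset hε ⟨sub_pos.2 hε.2, sub_lt_self 1 hε.1⟩
  have hγ' : ContinuousOn (deriv γ) (uIcc ε (1 - ε)) :=
    (hγ.continuousOn_deriv_of_isOpen isOpen_Ioo le_rfl).mono hsub
  have hderiv (y : E) (u : ℝ) (hu : u ∈ uIcc ε (1 - ε)) :
      HasDerivAt (fun v => φ (bridgePath γ y v))
        (fderiv ℝ φ (bridgePath γ y u) (bridgeVelocity γ y u)) u :=
    (hφ.differentiable one_ne_zero _).hasFDerivAt.comp_hasDerivAt u <|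
      hasDerivAt_bridgePath ((hγ.differentiableOn one_ne_zero).differentiableAt
        (isOpen_Ioo.mem_nhds (hsub hu))) y
  have hcont : ContinuousOn
      (fun p : ℝ × E => fderiv ℝ φ (bridgePath γ p.2 p.1) (bridgeVelocity γ p.2 p.1))
      (uIcc ε (1 - ε) ×ˢ tsupport w) :=
    ((hφ.continuous_fderiv one_ne_zero).comp_continuousOn
      (continuousOn_uncurry_bridgePath (hγ.continuousOn.mono hsub) _)).clm_apply
        (continuousOn_uncurry_bridgeVelocity hγ' _)
  simpa only [bridgePairing, setIntegral_tsupport_smul] using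
    intervalIntegral_setIntegral_smul_of_hasDerivAt (f := fun u y => φ (bridgePath γ y u))
      (f' := fun u y => fderiv ℝ φ (bridgePath γ y u) (bridgeVelocity γ y u))
      hwc hw.integrableOn hcont fun y _ => hderiv y

lemma tendsto_integral_smul_bridgePath_sub (hγ : ContinuousOn γ (Icc 0 1)) (hw : Integrable w μ)
    (hwc : HasCompactSupport w) (hφ : Continuous φ) :
    Tendsto (fun ε => ∫ y, w y • (φ (bridgePath γ y (1 - ε)) - φ (bridgePath γ y ε)) ∂μ)
      (𝓝[Icc 0 1] 0) (𝓝 (∫ y, w y • (φ (γ 1) - φ (γ 0)) ∂μ)) := by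
  have hpath : ContinuousOn (fun p : ℝ × E => φ (bridgePath γ p.2 p.1)) (Icc 0 1 ×ˢ tsupport w) :=
    hφ.comp_continuousOn (continuousOn_uncurry_bridgePath hγ _)
  have hreflect : ContinuousOn (fun p : ℝ × E => φ (bridgePath γ p.2 (1 - p.1)))
      (Icc 0 1 ×ˢ tsupport w) :=
    hpath.comp (f := fun p : ℝ × E => (1 - p.1, p.2)) (by fun_prop) fun p hp =>
      ⟨Icc.one_sub_mem hp.1, hp.2⟩
  have hcont := continuousOn_setIntegral_smul
    (f := fun ε y => φ (bridgePath γ y (1 - ε)) - φ (bridgePath γ y ε))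
    isCompact_Icc hwc hw.integrableOn (hreflect.sub hpath)
  simpa only [ContinuousWithinAt, setIntegral_tsupport_smul, sub_zero, bridgePath_zero,
    bridgePath_one] using hcont 0 (left_mem_Icc.2 zero_le_one)

theorem bridgePair_grad_tendsto_general [CompleteSpace F] [SFinite μ]
    (hγ : ContinuousOn γ (Icc 0 1)) (hγ' : ContDiffOn ℝ 1 γ (Ioo 0 1))
    (hw : Integrable w μ) (hwc : HasCompactSupport w) (hφ : ContDiff ℝ 1 φ) :
    Tendsto (fun ε => bridgePairing μ γ w ε (fderiv ℝ φ)) (𝓝[>] 0)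
      (𝓝 ((∫ y, w y ∂μ) • (φ (γ 1) - φ (γ 0)))) := by
  rw [← integral_smul_const, ← nhdsWithin_Ioo_eq_nhdsGT one_pos]
  refine ((tendsto_integral_smul_bridgePath_sub hγ hw hwc hφ.continuous).mono_left
    (nhdsWithin_mono 0 Ioo_subset_Icc_self)).congr' ?_
  filter_upwards [self_mem_nhdsWithin] with ε hε
  exact (bridgePairing_fderiv hγ' hw hwc hφ hε).symm

end Bridge

lemma dot3_grad3 (f : (Fin 3 → ℝ) → ℝ) (x v : Fin 3 → ℝ) :
    dot3 (grad3 f x) v = fderiv ℝ f x v := by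
  simp only [dot3, grad3, pd]
  conv_rhs => rw [pi_eq_sum_univ' v, map_sum]
  simp only [map_smul, smul_eq_mul, mul_comm]

lemma bridgePair_grad3 (γ : ℝ → Fin 3 → ℝ) (s : (Fin 3 → ℝ) → ℝ) (ε : ℝ)
    (f : (Fin 3 → ℝ) → ℝ) :
    bridgePair γ s ε (grad3 f) = bridgePairing volume γ s ε (fderiv ℝ f) := by
  simp only [bridgePair, bridgePairing, bridgePath, bridgeVelocity, dot3_grad3, smul_eq_mul]

/-- The distributions `div b_ε` converge, as `ε → 0`, to `q δ_{x₁} − q δ_{x₂}` when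
tested against C¹ functions: `lim_{ε→0} ⟨b_ε, grad s'⟩ = q (s'(x₂) − s'(x₁))`.
In particular the limit is `0` whenever `s'` vanishes at both charge locations. -/
theorem bridgePair_grad_tendsto (x₁ x₂ : Fin 3 → ℝ) (γ₀ : ℝ → Fin 3 → ℝ)
    (hγ : ContDiff ℝ 1 γ₀) (hγ0 : γ₀ 0 = x₁) (hγ1 : γ₀ 1 = x₂)
    (s : (Fin 3 → ℝ) → ℝ) (hs : Continuous s) (hsc : HasCompactSupport s)
    (q : ℝ) (hq : ∫ y, s y = q) :
    ∀ s' : (Fin 3 → ℝ) → ℝ, ContDiff ℝ 1 s' →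
      Tendsto (fun ε => bridgePair γ₀ s ε (grad3 s')) (nhdsWithin 0 (Set.Ioi 0))
        (nhds (q * (s' x₂ - s' x₁))) ∧
      (s' x₁ = 0 → s' x₂ = 0 →
        Tendsto (fun ε => bridgePair γ₀ s ε (grad3 s')) (nhdsWithin 0 (Set.Ioi 0))
          (nhds 0)) := by
  intro s' hs'
  have hlim := bridgePair_grad_tendsto_general (μ := volume) hγ.continuous.continuousOn
    hγ.contDiffOn (hs.integrable_of_hasCompactSupport hsc) hsc hs'
  simp only [← bridgePair_grad3, hq, hγ0, hγ1, smul_eq_mul] at hlim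
  exact ⟨hlim, fun h₁ h₂ => by simpa only [h₁, h₂, sub_zero, mul_zero] using hlim⟩
end

section
/- Let x₁, x₂ ∈ ℝ³, let γ₀ : [0,1] → ℝ³ be a smooth path with γ₀(0) = x₁, γ₀(1) = x₂, and let s : ℝ³ → ℝ be a smooth compactly supported function with supp s ⊆ closedBall(0, M). Define, for x ∈ ℝ³ \ {x₁, x₂}, b₀(x) = ∫₀¹ (u(1−u))^{−3} s( (x − γ₀(u))/(u(1−u)) ) · ( γ₀'(u) + (1−2u)(x − γ₀(u))/(u(1−u)) ) du. Then for every x ∈ ℝ³ \ {x₁, x₂} the integrand vanishes for u in neighborhoods of 0 and 1 (so the integral is well defined), b₀ is smooth on ℝ³ \ {x₁, x₂}, and div b₀ = 0 on ℝ³ \ {x₁, x₂}. (The gauge-bridge field is divergence-free away from the two static charges.) -/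
/-!
Put `w(u) = u (1 - u)` and let the profile `s` be carried by the motion `z ↦ γ(u) + w(u) z`. Its
density at time `u` is `ρ(u, x) = w⁻ᵈ s((x - γ) / w)`, where `d` is the dimension, the velocity at
`x` is `v(u, x) = γ' + (w' / w) (x - γ)`, and `b₀` is the time integral of the flux `ρ v`.
Conservation of mass is the continuity equation `∂ρ/∂u = - div (ρ v)`. At the times `0` and `1` the
whole mass sits at `γ(0)` and `γ(1)`, so near any other point `ρ` vanishes for `u` close to `0` and
`1`. There one may differentiate under the integral sign, and
`div b₀ = - ∫₀¹ ∂ρ/∂u du = ρ(0, x) - ρ(1, x) = 0`.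
-/

open MeasureTheory

/-- Divergence of a vector field on ℝ³: `div v = ∂₁v₁ + ∂₂v₂ + ∂₃v₃`. -/
noncomputable def divE (v : E3 → E3) (x : E3) : ℝ :=
  ∑ i, pdE (fun y => v y i) i x

/-- The integrand of the gauge-bridge field:
`(u(1−u))⁻³ s((x − γ₀(u))/(u(1−u))) (γ₀'(u) + (1−2u)(x − γ₀(u))/(u(1−u)))`. -/
noncomputable def bridgeIntegrand (γ₀ : ℝ → E3) (s : E3 → ℝ) (u : ℝ) (x : E3) : E3 :=
  (s ((u * (1 - u))⁻¹ • (x - γ₀ u)) / (u * (1 - u)) ^ 3) •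
    (deriv γ₀ u + ((1 - 2 * u) * (u * (1 - u))⁻¹) • (x - γ₀ u))

/-- The gauge-bridge field `b₀(x) = ∫₀¹ bridgeIntegrand(u, x) du`. -/
noncomputable def b0 (γ₀ : ℝ → E3) (s : E3 → ℝ) (x : E3) : E3 :=
  ∫ u in (0:ℝ)..1, bridgeIntegrand γ₀ s u x

open Set Filter Topology Module
open scoped ContDiff Convolution Function

section ParametricIntegral

variable {P T F : Type*} [NormedAddCommGroup P] [NormedSpace ℝ P] [NormedAddCommGroup T]
  [NormedSpace ℝ T] [NormedAddCommGroup F] [NormedSpace ℝ F]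
  {f : P → T → F} {U : Set P} {k : Set T} {p : P}

lemma fderiv_slice_eq_comp_inl {t : T} (hf : DifferentiableAt ℝ ↿f (p, t)) :
    fderiv ℝ (fun q => f q t) p = fderiv ℝ ↿f (p, t) ∘L .inl ℝ P T :=
  (HasFDerivAt.comp (f := fun q => (q, t)) p hf.hasFDerivAt
    (hasFDerivAt_prodMk_left p t)).fderiv

lemma differentiableAt_uncurry (hU : IsOpen U) (hf : ContDiffOn ℝ 1 ↿f (U ×ˢ univ)) (hp : p ∈ U)
    (t : T) : DifferentiableAt ℝ ↿f (p, t) :=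
  (hf.contDiffAt ((hU.prod isOpen_univ).mem_nhds ⟨hp, mem_univ t⟩)).differentiableAt one_ne_zero

lemma continuous_fderiv_uncurry (hU : IsOpen U) (hf : ContDiffOn ℝ 1 ↿f (U ×ˢ univ))
    (hp : p ∈ U) : Continuous fun t => fderiv ℝ ↿f (p, t) :=
  (hf.continuousOn_fderiv_of_isOpen (hU.prod isOpen_univ) le_rfl).comp_continuous
    (.prodMk_right p) fun _ => ⟨hp, mem_univ _⟩

lemma hasCompactSupport_fderiv_uncurry (hU : IsOpen U) (hk : IsCompact k)
    (hfk : ∀ q ∈ U, ∀ t ∉ k, f q t = 0) (hp : p ∈ U) :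
    HasCompactSupport fun t => fderiv ℝ ↿f (p, t) := by
  refine HasCompactSupport.intro hk fun t ht => ?_
  have hzero : ↿f =ᶠ[𝓝 (p, t)] fun _ => 0 := by
    filter_upwards [(hU.prod hk.isClosed.isOpen_compl).mem_nhds ⟨hp, ht⟩] with q hq
    exact hfk q.1 hq.1 q.2 hq.2
  rw [hzero.fderiv_eq, fderiv_const_apply]

variable [MeasurableSpace T] [BorelSpace T] {μ : Measure T} [IsLocallyFiniteMeasure μ]

lemma integrable_fderiv_uncurry (hU : IsOpen U) (hk : IsCompact k)
    (hfk : ∀ q ∈ U, ∀ t ∉ k, f q t = 0) (hf : ContDiffOn ℝ 1 ↿f (U ×ˢ univ)) (hp : p ∈ U) :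
    Integrable (fun t => fderiv ℝ ↿f (p, t)) μ :=
  (continuous_fderiv_uncurry hU hf hp).integrable_of_hasCompactSupport
    (hasCompactSupport_fderiv_uncurry hU hk hfk hp)

lemma integrable_fderiv_slice (hU : IsOpen U) (hk : IsCompact k)
    (hfk : ∀ q ∈ U, ∀ t ∉ k, f q t = 0) (hf : ContDiffOn ℝ 1 ↿f (U ×ˢ univ)) (hp : p ∈ U) :
    Integrable (fun t => fderiv ℝ (fun q => f q t) p) μ := by
  simp only [fderiv_slice_eq_comp_inl (differentiableAt_uncurry hU hf hp _)]
  exact ((ContinuousLinearMap.compL ℝ P (P × T) F).flip (.inl ℝ P T)).integrable_comp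
    (integrable_fderiv_uncurry hU hk hfk hf hp)

variable [μ.IsNegInvariant]

-- An integral over `T` is a convolution with the constant `1`, evaluated at `0`; this gives
-- access to the theory of convolutions depending on a parameter.
omit [NormedSpace ℝ T] [IsLocallyFiniteMeasure μ] in
lemma const_one_convolution_apply_zero (g : T → F) :
    ((fun _ => (1 : ℝ)) ⋆[ContinuousLinearMap.lsmul ℝ ℝ, μ] g) 0 = ∫ t, g t ∂μ := by
  simp [convolution, integral_neg_eq_self]

theorem contDiffOn_integral_of_compact {n : ℕ∞} (hU : IsOpen U) (hk : IsCompact k)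
    (hfk : ∀ q ∈ U, ∀ t ∉ k, f q t = 0) (hf : ContDiffOn ℝ n ↿f (U ×ˢ univ)) :
    ContDiffOn ℝ n (fun q => ∫ t, f q t ∂μ) U := by
  simp only [← const_one_convolution_apply_zero]
  exact contDiffOn_convolution_right_with_param_comp _ contDiffOn_const hU hk
    (fun q t hq => hfk q hq t) (locallyIntegrable_const 1) hf

theorem hasFDerivAt_integral_of_compact [CompleteSpace F] (hU : IsOpen U) (hk : IsCompact k)
    (hfk : ∀ q ∈ U, ∀ t ∉ k, f q t = 0) (hf : ContDiffOn ℝ 1 ↿f (U ×ˢ univ)) (hp : p ∈ U) :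
    HasFDerivAt (fun q => ∫ t, f q t ∂μ) (∫ t, fderiv ℝ (fun q => f q t) p ∂μ) p := by
  have hconv := (hasFDerivAt_convolution_right_with_param (μ := μ) (.lsmul ℝ ℝ) hU hk
    (fun q t hq => hfk q hq t) (locallyIntegrable_const 1) hf (p, 0) hp).comp p
    (hasFDerivAt_prodMk_left (𝕜 := ℝ) p (0 : T))
  have htotal : ((fun _ => (1 : ℝ)) ⋆[(ContinuousLinearMap.lsmul ℝ ℝ).precompR (P × T), μ]
      fun t => fderiv ℝ ↿f (p, t)) 0 = ∫ t, fderiv ℝ ↿f (p, t) ∂μ :=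
    const_one_convolution_apply_zero fun t => fderiv ℝ ↿f (p, t)
  have hpartial : ∫ t, fderiv ℝ (fun q => f q t) p ∂μ =
      (∫ t, fderiv ℝ ↿f (p, t) ∂μ) ∘L .inl ℝ P T := by
    simp only [fderiv_slice_eq_comp_inl (differentiableAt_uncurry hU hf hp _)]
    exact ((ContinuousLinearMap.compL ℝ P (P × T) F).flip (.inl ℝ P T)).integral_comp_comm
      (integrable_fderiv_uncurry hU hk hfk hf hp)
  rw [hpartial, ← htotal]
  exact hconv.congr_of_eventuallyEq (.of_forall fun q =>
    (const_one_convolution_apply_zero (f q)).symm)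

end ParametricIntegral

section Divergence

variable {E : Type*} [NormedAddCommGroup E] [NormedSpace ℝ E]

/-- The divergence of a vector field on a finite-dimensional real normed space, as the trace of its
Fréchet derivative; it is independent of coordinates. -/
noncomputable def divergence (v : E → E) (x : E) : ℝ :=
  LinearMap.trace ℝ E (fderiv ℝ v x)

lemma divE_eq_divergence {v : E3 → E3} {x : E3} (hv : DifferentiableAt ℝ v x) :
    divE v x = divergence v x := by
  rw [divergence, LinearMap.trace_eq_sum_inner _ (EuclideanSpace.basisFun (Fin 3) ℝ)]
  refine Finset.sum_congr rfl fun i _ => ?_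
  have hvi : HasFDerivAt (fun y => v y i) (EuclideanSpace.proj i ∘L fderiv ℝ v x) x :=
    (EuclideanSpace.proj i : E3 →L[ℝ] ℝ).hasFDerivAt.comp x hv.hasFDerivAt
  simp [pdE, hvi.fderiv, EuclideanSpace.inner_single_left]

lemma divergence_smul [FiniteDimensional ℝ E] {f : E → ℝ} {v : E → E} {x : E}
    (hf : DifferentiableAt ℝ f x) (hv : DifferentiableAt ℝ v x) :
    divergence (fun y => f y • v y) x = f x * divergence v x + fderiv ℝ f x (v x) := by
  simp [divergence, fderiv_fun_smul hf hv]

variable [FiniteDimensional ℝ E] {T : Type*} [NormedAddCommGroup T] [NormedSpace ℝ T]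
  [MeasurableSpace T] [BorelSpace T] {μ : Measure T} [IsLocallyFiniteMeasure μ] {f : E → T → E}
  {U : Set E} {k : Set T} {x : E}

lemma integrable_divergence (hU : IsOpen U) (hk : IsCompact k)
    (hfk : ∀ y ∈ U, ∀ t ∉ k, f y t = 0) (hf : ContDiffOn ℝ 1 ↿f (U ×ˢ univ)) (hx : x ∈ U) :
    Integrable (fun t => divergence (fun y => f y t) x) μ :=
  (LinearMap.trace ℝ E ∘ₗ ContinuousLinearMap.coeLM ℝ).toContinuousLinearMap.integrable_comp
    (integrable_fderiv_slice hU hk hfk hf hx)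

lemma divergence_integral [μ.IsNegInvariant] (hU : IsOpen U) (hk : IsCompact k)
    (hfk : ∀ y ∈ U, ∀ t ∉ k, f y t = 0) (hf : ContDiffOn ℝ 1 ↿f (U ×ˢ univ)) (hx : x ∈ U) :
    divergence (fun y => ∫ t, f y t ∂μ) x = ∫ t, divergence (fun y => f y t) x ∂μ := by
  have : CompleteSpace E := FiniteDimensional.complete ℝ E
  rw [divergence, (hasFDerivAt_integral_of_compact hU hk hfk hf hx).fderiv]
  exact ((LinearMap.trace ℝ E ∘ₗ
    ContinuousLinearMap.coeLM ℝ).toContinuousLinearMap.integral_comp_comm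
      (integrable_fderiv_slice hU hk hfk hf hx)).symm

theorem divergence_integral_eq_zero_of_hasDerivAt {J : E → ℝ → E} {ρ : ℝ → ℝ}
    {k : Set ℝ} (hU : IsOpen U) (hk : IsCompact k) (hJk : ∀ y ∈ U, ∀ t ∉ k, J y t = 0)
    (hJ : ContDiffOn ℝ 1 ↿J (U ×ˢ univ)) (hx : x ∈ U) (hρk : ∀ t ∉ k, ρ t = 0)
    (hρ : ∀ t, HasDerivAt ρ (-divergence (fun y => J y t) x) t) :
    divergence (fun y => ∫ t, J y t) x = 0 := by
  have hρc : Continuous ρ := continuous_iff_continuousAt.2 fun t => (hρ t).continuousAt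
  have hflux : ∫ t, -divergence (fun y => J y t) x = 0 :=
    integral_eq_zero_of_hasDerivAt_of_integrable hρ (integrable_divergence hU hk hJk hJ hx).neg
      (hρc.integrable_of_hasCompactSupport (.intro hk hρk))
  rw [divergence_integral hU hk hJk hJ hx, ← neg_eq_zero, ← integral_neg, hflux]

end Divergence

section Transport

variable {E : Type*} [NormedAddCommGroup E] [NormedSpace ℝ E]

/-- The density `w⁻ᵈ s((x - c) / w)`, `d = dim E`: the push-forward of the density `s` under the
affine map `z ↦ c + w z`, for `w > 0`. -/
noncomputable def affineDensity (s : E → ℝ) (c : E) (w : ℝ) (x : E) : ℝ :=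
  s (w⁻¹ • (x - c)) / w ^ finrank ℝ E

/-- The velocity at `x` of the motion `u ↦ c(u) + w(u) z`, in terms of the current values of `c`,
`w` and their derivatives. -/
noncomputable def affineVelocity (c c' : E) (w w' : ℝ) (x : E) : E :=
  c' + (w' * w⁻¹) • (x - c)

lemma hasFDerivAt_affineVelocity (c c' : E) (w w' : ℝ) (x : E) :
    HasFDerivAt (affineVelocity c c' w w') ((w' * w⁻¹) • ContinuousLinearMap.id ℝ E) x :=
  (((hasFDerivAt_id x).sub_const c).const_smul (w' * w⁻¹)).const_add c'

lemma divergence_affineVelocity [FiniteDimensional ℝ E] (c c' : E) (w w' : ℝ) (x : E) :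
    divergence (affineVelocity c c' w w') x = finrank ℝ E * (w' * w⁻¹) := by
  simp [divergence, (hasFDerivAt_affineVelocity c c' w w' x).fderiv, mul_comm]

lemma hasFDerivAt_affineDensity {s : E → ℝ} {c : E} {w : ℝ} {x : E}
    (hs : DifferentiableAt ℝ s (w⁻¹ • (x - c))) :
    HasFDerivAt (affineDensity s c w)
      ((w ^ finrank ℝ E)⁻¹ • w⁻¹ • fderiv ℝ s (w⁻¹ • (x - c))) x := by
  refine ((hs.hasFDerivAt.comp x (((hasFDerivAt_id x).sub_const c).const_smul w⁻¹)).mul_const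
    (w ^ finrank ℝ E)⁻¹).congr_fderiv ?_
  ext v
  simp

lemma affineDensity_eq_zero {s : E → ℝ} {M : ℝ} (hs : tsupport s ⊆ Metric.closedBall 0 M)
    {c : E} {w : ℝ} (hw : 0 < w) {x : E} (hx : M * w < ‖x - c‖) : affineDensity s c w x = 0 := by
  have hz : w⁻¹ • (x - c) ∉ tsupport s := fun hmem => by
    have := hs hmem
    rw [mem_closedBall_zero_iff, norm_smul, norm_inv, Real.norm_of_nonneg hw.le,
      inv_mul_le_iff₀' hw] at this
    exact this.not_gt hx
  rw [affineDensity, image_eq_zero_of_notMem_tsupport hz, zero_div]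

section HasDerivAt

variable {c : ℝ → E} {c' : E} {w : ℝ → ℝ} {w' u : ℝ}

lemma hasDerivAt_inv_smul_sub (hc : HasDerivAt c c' u) (hw : HasDerivAt w w' u) (hwu : w u ≠ 0)
    (x : E) : HasDerivAt (fun t => (w t)⁻¹ • (x - c t))
      (-(w u)⁻¹ • affineVelocity (c u) c' (w u) w' x) u := by
  refine ((hw.inv hwu).smul (hc.const_sub x)).congr_deriv ?_
  simp only [affineVelocity, Pi.inv_apply]
  module

lemma hasDerivAt_inv_pow (hw : HasDerivAt w w' u) (hwu : w u ≠ 0) (d : ℕ) :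
    HasDerivAt (fun t => (w t ^ d)⁻¹) (-(d * (w' * (w u)⁻¹)) * (w u ^ d)⁻¹) u := by
  refine ((hw.pow d).inv (pow_ne_zero _ hwu)).congr_deriv ?_
  rcases d with - | d
  · simp
  · simp only [Pi.pow_apply, add_tsub_cancel_right]
    field_simp
    ring

/-- The continuity equation `∂ρ/∂u = - div (ρ v)`. -/
theorem hasDerivAt_affineDensity [FiniteDimensional ℝ E] {s : E → ℝ} {x : E}
    (hs : DifferentiableAt ℝ s ((w u)⁻¹ • (x - c u))) (hc : HasDerivAt c c' u)
    (hw : HasDerivAt w w' u) (hwu : w u ≠ 0) :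
    HasDerivAt (fun t => affineDensity s (c t) (w t) x)
      (-divergence (fun y => affineDensity s (c u) (w u) y • affineVelocity (c u) c' (w u) w' y) x)
      u := by
  refine ((hs.hasFDerivAt.comp_hasDerivAt u (hasDerivAt_inv_smul_sub hc hw hwu x)).mul
    (hasDerivAt_inv_pow hw hwu (finrank ℝ E))).congr_deriv ?_
  rw [divergence_smul (hasFDerivAt_affineDensity hs).differentiableAt
    (hasFDerivAt_affineVelocity _ _ _ _ x).differentiableAt, divergence_affineVelocity,
    (hasFDerivAt_affineDensity hs).fderiv]
  simp only [affineDensity, map_smul, smul_eq_mul, FunLike.coe_smul, Pi.smul_apply]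
  ring

end HasDerivAt

end Transport

section Bridge

variable {E : Type*} [NormedAddCommGroup E] [NormedSpace ℝ E] {γ : ℝ → E} {s : E → ℝ} {M : ℝ}
  {x : E} {u : ℝ} {n : ℕ∞}

/-- The density transported along the path `γ` at scale `u (1 - u)`, as a function of the time `u`.
It is extended by zero outside `(0, 1)`, so that integrals over `u` range over the whole line. -/
noncomputable def bridgeDensity (γ : ℝ → E) (s : E → ℝ) (x : E) : ℝ → ℝ :=
  (Ioo 0 1).indicator fun u => affineDensity s (γ u) (u * (1 - u)) x

/-- The flux of the density `bridgeDensity γ s`. -/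
noncomputable def bridgeFlux (γ : ℝ → E) (s : E → ℝ) (x : E) (u : ℝ) : E :=
  bridgeDensity γ s x u • affineVelocity (γ u) (deriv γ u) (u * (1 - u)) (1 - 2 * u) x

/-- The gauge-bridge field in a space of arbitrary dimension, as the time integral of the flux. -/
noncomputable def bridgeField (γ : ℝ → E) (s : E → ℝ) (x : E) : E :=
  ∫ u, bridgeFlux γ s x u

lemma bridgeIntegrand_eq_bridgeFlux (γ₀ : ℝ → E3) (s : E3 → ℝ) (x : E3) {u : ℝ}
    (hu : u ∈ Icc (0 : ℝ) 1) : bridgeIntegrand γ₀ s u x = bridgeFlux γ₀ s x u := by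
  rcases eq_endpoints_or_mem_Ioo_of_mem_Icc hu with rfl | rfl | hu
  -- at the endpoints `bridgeIntegrand` divides by zero
  · simp [bridgeIntegrand, bridgeFlux, bridgeDensity]
  · simp [bridgeIntegrand, bridgeFlux, bridgeDensity]
  · simp [bridgeIntegrand, bridgeFlux, bridgeDensity, indicator_of_mem hu, affineDensity,
      affineVelocity]

lemma b0_eq_bridgeField (γ₀ : ℝ → E3) (s : E3 → ℝ) : b0 γ₀ s = bridgeField γ₀ s := by
  ext1 x
  rw [b0, bridgeField, intervalIntegral.integral_of_le zero_le_one,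
    setIntegral_congr_fun measurableSet_Ioc
      fun u hu => bridgeIntegrand_eq_bridgeFlux γ₀ s x (Ioc_subset_Icc_self hu)]
  refine setIntegral_eq_integral_of_forall_compl_eq_zero fun u hu => ?_
  rw [bridgeFlux, bridgeDensity, indicator_of_notMem (mt (Ioo_subset_Ioc_self ·) hu), zero_smul]

lemma eventually_bridgeDensity_eq_zero (hγ : ContinuousAt γ u)
    (hs : tsupport s ⊆ Metric.closedBall 0 M) (hu : u * (1 - u) = 0) (hx : x ≠ γ u) :
    ∀ᶠ q in 𝓝 (x, u), bridgeDensity γ s q.1 q.2 = 0 := by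
  have hγ' : ContinuousAt (fun q : E × ℝ => ‖q.1 - γ q.2‖) (x, u) := by
    have := ContinuousAt.comp (f := fun q : E × ℝ => q.2) (x := (x, u)) hγ continuousAt_snd
    exact (continuousAt_fst.sub this).norm
  have hlt : ∀ᶠ q : E × ℝ in 𝓝 (x, u), M * (q.2 * (1 - q.2)) < ‖q.1 - γ q.2‖ :=
    ContinuousAt.eventually_lt (by fun_prop) hγ' (by simpa [hu, sub_eq_zero] using hx)
  filter_upwards [hlt] with q hq
  exact indicator_apply_eq_zero.2 fun hq2 =>
    affineDensity_eq_zero hs (mul_pos hq2.1 (sub_pos.2 hq2.2)) hq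

lemma exists_isOpen_bridgeDensity_eq_zero (hγ : Continuous γ)
    (hs : tsupport s ⊆ Metric.closedBall 0 M) (hx0 : x ≠ γ 0) (hx1 : x ≠ γ 1) :
    ∃ U, IsOpen U ∧ x ∈ U ∧ ∃ η > 0, ∀ y ∈ U, ∀ u ∉ Icc η (1 - η), bridgeDensity γ s y u = 0 := by
  obtain ⟨ε₀, hε₀, H₀⟩ := Metric.eventually_nhds_iff_ball.1
    (eventually_bridgeDensity_eq_zero hγ.continuousAt hs (by simp) hx0)
  obtain ⟨ε₁, hε₁, H₁⟩ := Metric.eventually_nhds_iff_ball.1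
    (eventually_bridgeDensity_eq_zero hγ.continuousAt hs (by simp) hx1)
  simp only [← ball_prod_same, Real.ball_eq_Ioo] at H₀ H₁
  refine ⟨Metric.ball x ε₀ ∩ Metric.ball x ε₁, Metric.isOpen_ball.inter Metric.isOpen_ball,
    ⟨Metric.mem_ball_self hε₀, Metric.mem_ball_self hε₁⟩, min ε₀ ε₁, lt_min hε₀ hε₁, ?_⟩
  rintro y ⟨hy₀, hy₁⟩ u hu
  by_cases hu01 : u ∈ Ioo (0 : ℝ) 1
  · rw [mem_Icc, not_and_or, not_le, not_le, sub_lt_comm, lt_min_iff, lt_min_iff] at hu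
    rcases hu with ⟨hu, -⟩ | ⟨-, hu⟩
    · exact H₀ (y, u) ⟨hy₀, by linarith [hu01.1], by linarith⟩
    · exact H₁ (y, u) ⟨hy₁, by linarith, by linarith [hu01.2]⟩
  · exact indicator_of_notMem hu01 _

lemma bridgeFlux_eq_zero (h : bridgeDensity γ s x u = 0) : bridgeFlux γ s x u = 0 := by
  rw [bridgeFlux, h, zero_smul]

lemma contDiffAt_bridgeFlux (hγ : ContDiff ℝ (n + 1) γ) (hs : ContDiff ℝ n s)
    (hu : u ∈ Ioo (0 : ℝ) 1) (x : E) : ContDiffAt ℝ n ↿(bridgeFlux γ s) (x, u) := by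
  have hw0 : u * (1 - u) ≠ 0 := (mul_pos hu.1 (sub_pos.2 hu.2)).ne'
  have hγn : ContDiff ℝ n γ := hγ.of_le le_self_add
  have hγ' : ContDiff ℝ n (deriv γ) := (contDiff_succ_iff_deriv.1 hγ).2.2
  have hw : ContDiffAt ℝ n (fun q : E × ℝ => q.2 * (1 - q.2)) (x, u) := by fun_prop
  have hsub : ContDiffAt ℝ n (fun q : E × ℝ => q.1 - γ q.2) (x, u) := by fun_prop
  have hdensity : ContDiffAt ℝ n
      (fun q : E × ℝ => affineDensity s (γ q.2) (q.2 * (1 - q.2)) q.1) (x, u) :=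
    (hs.contDiffAt.comp (x, u) ((hw.inv hw0).smul hsub)).div (hw.pow _) (pow_ne_zero _ hw0)
  have hvelocity : ContDiffAt ℝ n (fun q : E × ℝ =>
      affineVelocity (γ q.2) (deriv γ q.2) (q.2 * (1 - q.2)) (1 - 2 * q.2) q.1) (x, u) :=
    (hγ'.comp contDiff_snd).contDiffAt.add ((ContDiffAt.mul (by fun_prop) (hw.inv hw0)).smul hsub)
  refine (hdensity.smul hvelocity).congr_of_eventuallyEq ?_
  filter_upwards [continuousAt_snd.eventually_mem (Ioo_mem_nhds hu.1 hu.2)] with q hq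
  simp [Function.HasUncurry.uncurry, bridgeFlux, bridgeDensity, indicator_of_mem hq]

lemma hasDerivAt_bridgeDensity_of_mem_Ioo [FiniteDimensional ℝ E] (hγ : Differentiable ℝ γ)
    (hs : Differentiable ℝ s) (hu : u ∈ Ioo (0 : ℝ) 1) (x : E) :
    HasDerivAt (bridgeDensity γ s x) (-divergence (fun y => bridgeFlux γ s y u) x) u := by
  have hw : HasDerivAt (fun t : ℝ => t * (1 - t)) (1 - 2 * u) u :=
    ((hasDerivAt_id' u).mul ((hasDerivAt_id' u).const_sub 1)).congr_deriv (by ring)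
  have hρ := hasDerivAt_affineDensity (x := x) (hs _) (hγ u).hasDerivAt hw
    (mul_pos hu.1 (sub_pos.2 hu.2)).ne'
  simp only [bridgeFlux, bridgeDensity, indicator_of_mem hu]
  refine hρ.congr_of_eventuallyEq ?_
  filter_upwards [Ioo_mem_nhds hu.1 hu.2] with t ht using indicator_of_mem ht _

section Localized

variable {U : Set E} {η : ℝ}

lemma contDiffOn_bridgeFlux (hγ : ContDiff ℝ (n + 1) γ) (hs : ContDiff ℝ n s) (hU : IsOpen U)
    (hη : 0 < η) (hsupp : ∀ y ∈ U, ∀ u ∉ Icc η (1 - η), bridgeDensity γ s y u = 0) :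
    ContDiffOn ℝ n ↿(bridgeFlux γ s) (U ×ˢ univ) := by
  rintro ⟨y, u⟩ ⟨hy, -⟩
  refine ContDiffAt.contDiffWithinAt ?_
  by_cases hu : u ∈ Icc η (1 - η)
  · exact contDiffAt_bridgeFlux hγ hs ⟨by linarith [hu.1], by linarith [hu.2]⟩ y
  · refine (contDiffAt_const (c := (0 : E))).congr_of_eventuallyEq ?_
    filter_upwards [(hU.prod isClosed_Icc.isOpen_compl).mem_nhds ⟨hy, hu⟩] with q hq
    exact bridgeFlux_eq_zero (hsupp q.1 hq.1 q.2 hq.2)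

lemma hasDerivAt_bridgeDensity [FiniteDimensional ℝ E] (hγ : Differentiable ℝ γ)
    (hs : Differentiable ℝ s) (hη : 0 < η)
    (hsupp : ∀ u ∉ Icc η (1 - η), bridgeDensity γ s x u = 0) (u : ℝ) :
    HasDerivAt (bridgeDensity γ s x) (-divergence (fun y => bridgeFlux γ s y u) x) u := by
  by_cases hu : u ∈ Ioo (0 : ℝ) 1
  · exact hasDerivAt_bridgeDensity_of_mem_Ioo hγ hs hu x
  · have hflux : (fun y => bridgeFlux γ s y u) = fun _ => 0 :=
      funext fun y => bridgeFlux_eq_zero (indicator_of_notMem hu _)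
    have hu' : u ∉ Icc η (1 - η) :=
      fun h => hu ⟨by linarith [h.1], by linarith [h.2]⟩
    have hρ : bridgeDensity γ s x =ᶠ[𝓝 u] fun _ => 0 := by
      filter_upwards [isClosed_Icc.isOpen_compl.mem_nhds hu'] with t ht using hsupp t ht
    simpa [hflux, divergence] using (hasDerivAt_const u (0 : ℝ)).congr_of_eventuallyEq hρ

end Localized

theorem contDiffAt_bridgeField (hγ : ContDiff ℝ (n + 1) γ) (hs : ContDiff ℝ n s)
    (hsM : tsupport s ⊆ Metric.closedBall 0 M) (hx0 : x ≠ γ 0) (hx1 : x ≠ γ 1) :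
    ContDiffAt ℝ n (bridgeField γ s) x := by
  obtain ⟨U, hU, hxU, η, hη, hsupp⟩ :=
    exists_isOpen_bridgeDensity_eq_zero hγ.continuous hsM hx0 hx1
  have hsmooth : ContDiffOn ℝ n (bridgeField γ s) U :=
    contDiffOn_integral_of_compact hU isCompact_Icc
      (fun y hy u hu => bridgeFlux_eq_zero (hsupp y hy u hu))
      (contDiffOn_bridgeFlux hγ hs hU hη hsupp)
  exact hsmooth.contDiffAt (hU.mem_nhds hxU)

theorem divergence_bridgeField [FiniteDimensional ℝ E] (hγ : ContDiff ℝ 2 γ) (hs : ContDiff ℝ 1 s)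
    (hsM : tsupport s ⊆ Metric.closedBall 0 M) (hx0 : x ≠ γ 0) (hx1 : x ≠ γ 1) :
    divergence (bridgeField γ s) x = 0 := by
  obtain ⟨U, hU, hxU, η, hη, hsupp⟩ :=
    exists_isOpen_bridgeDensity_eq_zero hγ.continuous hsM hx0 hx1
  exact divergence_integral_eq_zero_of_hasDerivAt hU isCompact_Icc
    (fun y hy u hu => bridgeFlux_eq_zero (hsupp y hy u hu))
    (contDiffOn_bridgeFlux (n := 1) (by simpa [one_add_one_eq_two] using hγ) hs hU hη hsupp)
    hxU (hsupp x hxU)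
    (hasDerivAt_bridgeDensity (hγ.differentiable two_ne_zero) (hs.differentiable one_ne_zero) hη
      (hsupp x hxU))

theorem b0_smooth_divergence_free_general [FiniteDimensional ℝ E] (hn : 1 ≤ n)
    (hγ : ContDiff ℝ (n + 1) γ) (hs : ContDiff ℝ n s) (hsM : tsupport s ⊆ Metric.closedBall 0 M)
    (hx0 : x ≠ γ 0) (hx1 : x ≠ γ 1) :
    (∃ η > 0, ∀ u, u < η ∨ 1 - η < u → bridgeFlux γ s x u = 0) ∧
      ContDiffAt ℝ n (bridgeField γ s) x ∧ divergence (bridgeField γ s) x = 0 := by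
  have hn' : (1 : WithTop ℕ∞) ≤ n := mod_cast hn
  have h2 : (2 : WithTop ℕ∞) ≤ n + 1 := by
    rw [← one_add_one_eq_two]
    gcongr
  refine ⟨?_, contDiffAt_bridgeField hγ hs hsM hx0 hx1,
    divergence_bridgeField (hγ.of_le h2) (hs.of_le hn') hsM hx0 hx1⟩
  obtain ⟨U, -, hxU, η, hη, hsupp⟩ :=
    exists_isOpen_bridgeDensity_eq_zero hγ.continuous hsM hx0 hx1
  refine ⟨η, hη, fun u hu => bridgeFlux_eq_zero (hsupp x hxU u ?_)⟩
  rwa [mem_Icc, not_and_or, not_le, not_le]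

end Bridge

/-- Away from the two static charges `x₁, x₂`, the integrand of the gauge-bridge field
vanishes for `u` near `0` and `1` (so `b₀` is well defined), `b₀` is smooth on
`ℝ³ \ {x₁, x₂}`, and it is divergence-free there. -/
theorem b0_smooth_divergence_free (x₁ x₂ : E3) (γ₀ : ℝ → E3)
    (hγ : ContDiff ℝ (⊤ : ℕ∞) γ₀) (hγ0 : γ₀ 0 = x₁) (hγ1 : γ₀ 1 = x₂)
    (s : E3 → ℝ) (hs : ContDiff ℝ (⊤ : ℕ∞) s) (hsc : HasCompactSupport s)
    (M : ℝ) (hss : tsupport s ⊆ Metric.closedBall 0 M) :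
    (∀ x : E3, x ≠ x₁ → x ≠ x₂ → ∃ η > (0:ℝ), ∀ u ∈ Set.Icc (0:ℝ) 1,
      (u < η ∨ 1 - η < u) → bridgeIntegrand γ₀ s u x = 0) ∧
    ContDiffOn ℝ (⊤ : ℕ∞) (b0 γ₀ s) ({x₁, x₂} : Set E3)ᶜ ∧
    (∀ x : E3, x ≠ x₁ → x ≠ x₂ → divE (b0 γ₀ s) x = 0) := by
  subst hγ0 hγ1
  have hbridge {x : E3} (hx0 : x ≠ γ₀ 0) (hx1 : x ≠ γ₀ 1) :=
    b0_smooth_divergence_free_general le_top hγ hs hss hx0 hx1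
  rw [b0_eq_bridgeField]
  refine ⟨fun x hx0 hx1 => ?_, fun x hx => ?_, fun x hx0 hx1 => ?_⟩
  · obtain ⟨η, hη, hvanish⟩ := (hbridge hx0 hx1).1
    exact ⟨η, hη, fun u hu hu' =>
      (bridgeIntegrand_eq_bridgeFlux γ₀ s x hu).trans (hvanish u hu')⟩
  · rw [mem_compl_iff, mem_insert_iff, mem_singleton_iff, not_or] at hx
    exact (hbridge hx.1 hx.2).2.1.contDiffWithinAt
  · obtain ⟨-, hsmooth, hdiv⟩ := hbridge hx0 hx1
    rw [divE_eq_divergence (hsmooth.differentiableAt (by simp)), hdiv]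
end
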